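/- arXiv:2411.15717 — 5 statements merged into one kernel-verified Lean document; each statement's English description precedes it below -/
import Mathlib

section
/- Let B ≥ 2, let λ_1,…,λ_n > 0 and w_1,…,w_n ≥ 0, and define the B-step objective r(θ_0,…,θ_{B−1}) = ∑_{j=1}^n w_j ∏_{l=0}^{B−1} (1 − θ_l λ_j)². Assume there exist B indices j with w_j > 0 whose values λ_j are pairwise distinct. Then no point θ ∈ ℝ^B with θ_j = θ_l for some j ≠ l is a local minimizer of r; in particular, every local minimizer of r has pairwise distinct coordinates. -/
/-!
Suppose `θ` is a local minimizer with `θ p = θ q = a`, `p ≠ q`. Move along `θ + t (e_p - e_q)`.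
Since `(1 - (a + t) λ)(1 - (a - t) λ) = (1 - a λ)² - t² λ²`, the objective along this curve is
`C - 2 A t² + D t⁴`, where `A = ∑ w_j G_j λ_j² (1 - a λ_j)²` and `G_j` is the product of the
remaining squared factors. Minimality at `t = 0` forces `A ≤ 0` (`nonpos_of_quartic_min`), and every
term of `A` is nonnegative, so for each `j` with `w_j > 0` some factor `1 - θ_l λ_j` vanishes.
As `θ p = θ q`, one may take `l ≠ q`. Thus the `B` distinct values `λ_j` of the activity assumption
are reciprocals of the at most `B - 1` values `θ_l`, `l ≠ q`, contradicting the pigeonhole principle.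
-/

open Filter Topology

/-- If `C - 2 A t² + D t⁴` has a local minimum at `t = 0`, then `A ≤ 0`: divide by `t²`
and let `t → 0`. -/
lemma nonpos_of_quartic_min (A D : ℝ)
    (h : ∀ᶠ t in 𝓝 (0 : ℝ), 0 ≤ -2 * t ^ 2 * A + t ^ 4 * D) : A ≤ 0 := by
  have h1 : ∀ᶠ t in 𝓝[≠] (0 : ℝ), 2 * A ≤ t ^ 2 * D := by
    filter_upwards [h.filter_mono nhdsWithin_le_nhds, self_mem_nhdsWithin] with t ht ht0
    have ht2 : 0 < t ^ 2 := by
      have : t ≠ 0 := ht0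
      positivity
    have : 0 ≤ t ^ 2 * (t ^ 2 * D - 2 * A) := by linarith [ht]
    linarith [nonneg_of_mul_nonneg_right this ht2]
  have h2 : Tendsto (fun t : ℝ => t ^ 2 * D) (𝓝[≠] 0) (𝓝 0) := by
    have hc : Continuous (fun t : ℝ => t ^ 2 * D) := by fun_prop
    have := hc.tendsto 0
    simp only [ne_eq, OfNat.ofNat_ne_zero, not_false_eq_true, zero_pow, zero_mul] at this
    exact this.mono_left nhdsWithin_le_nhds
  linarith [ge_of_tendsto h2 h1]

/-- Splitting off the factors at two distinct indices, for a function that agrees with `θ`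
elsewhere. -/
lemma prod_split_pair {B : ℕ} {p q : Fin B} (hpq : p ≠ q) (θ φ : Fin B → ℝ) (c : ℝ)
    (hφ : ∀ l, l ≠ p → l ≠ q → φ l = θ l) :
    ∏ l, (1 - φ l * c) ^ 2 =
      (∏ l ∈ (Finset.univ.erase p).erase q, (1 - θ l * c) ^ 2) *
        ((1 - φ p * c) * (1 - φ q * c)) ^ 2 := by
  have hG : ∏ l ∈ (Finset.univ.erase p).erase q, (1 - θ l * c) ^ 2 =
      ∏ l ∈ (Finset.univ.erase p).erase q, (1 - φ l * c) ^ 2 := by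
    refine Finset.prod_congr rfl fun l hl => ?_
    simp only [Finset.mem_erase, Finset.mem_univ, and_true] at hl
    rw [hφ l hl.2 hl.1]
  rw [hG, ← Finset.mul_prod_erase Finset.univ _ (Finset.mem_univ p),
    ← Finset.mul_prod_erase (Finset.univ.erase p) _ (a := q) (by simp [hpq.symm])]
  ring

/-- **Optimal step sizes are pairwise distinct (Theorem: different step sizes).**
Under the `B`-activity assumption (there are `B` indices `j` with `w j > 0` whose
eigenvalues `lam j` are pairwise distinct), no point `θ ∈ ℝ^B` with two equal
coordinates can be a local minimizer of the `B`-step objective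
`r θ = ∑ j, w j * ∏ l, (1 − θ l * lam j)²`. -/
theorem no_local_min_with_equal_step_sizes
    (n B : ℕ) (hB : 2 ≤ B)
    (lam w : Fin n → ℝ)
    (hlam : ∀ j, 0 < lam j) (hw : ∀ j, 0 ≤ w j)
    (hact : ∃ S : Finset (Fin n), S.card = B ∧ (∀ j ∈ S, 0 < w j) ∧
      Set.InjOn lam (S : Set (Fin n)))
    (r : (Fin B → ℝ) → ℝ)
    (hr : ∀ θ : Fin B → ℝ, r θ = ∑ j, w j * ∏ l, (1 - θ l * lam j) ^ 2) :
    ∀ θ : Fin B → ℝ, (∃ j l : Fin B, j ≠ l ∧ θ j = θ l) → ¬ IsLocalMin r θ := by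
  rintro θ ⟨p, q, hpq, hθ⟩ hmin
  obtain ⟨S, hScard, hSw, hSinj⟩ := hact
  let G : Fin n → ℝ := fun j => ∏ l ∈ (Finset.univ.erase p).erase q, (1 - θ l * lam j) ^ 2
  have hG0 : ∀ j, 0 ≤ G j := fun j => Finset.prod_nonneg fun l _ => sq_nonneg _
  let φ : ℝ → Fin B → ℝ := fun t =>
    θ + t • (Pi.single p (1 : ℝ) - Pi.single q (1 : ℝ) : Fin B → ℝ)
  have hφ0 : φ 0 = θ := by simp [φ]
  have hφp : ∀ t, φ t p = θ p + t := fun t => by simp [φ, hpq]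
  have hφq : ∀ t, φ t q = θ p - t := fun t => by simp [φ, hpq.symm, hθ, sub_eq_add_neg]
  have hφl : ∀ t l, l ≠ p → l ≠ q → φ t l = θ l := fun t l h1 h2 => by simp [φ, h1, h2]
  have hrφ : ∀ t, r (φ t) - r θ =
      -2 * t ^ 2 * (∑ j, w j * (G j * (lam j ^ 2 * (1 - θ p * lam j) ^ 2))) +
        t ^ 4 * ∑ j, w j * (G j * lam j ^ 4) := by
    intro t
    rw [hr, hr, ← Finset.sum_sub_distrib, Finset.mul_sum, Finset.mul_sum,
      ← Finset.sum_add_distrib]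
    refine Finset.sum_congr rfl fun j _ => ?_
    rw [prod_split_pair hpq θ (φ t) (lam j) (hφl t),
      prod_split_pair hpq θ θ (lam j) (fun _ _ _ => rfl), hφp, hφq, ← hθ]
    simp only [G]
    ring
  have hterm : ∀ j, 0 ≤ w j * (G j * (lam j ^ 2 * (1 - θ p * lam j) ^ 2)) := fun j =>
    mul_nonneg (hw j) (mul_nonneg (hG0 j) (by positivity))
  have hA : ∑ j, w j * (G j * (lam j ^ 2 * (1 - θ p * lam j) ^ 2)) = 0 := by
    refine le_antisymm (nonpos_of_quartic_min _ (∑ j, w j * (G j * lam j ^ 4)) ?_)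
      (Finset.sum_nonneg fun j _ => hterm j)
    have hc : Tendsto φ (𝓝 0) (𝓝 θ) := by
      have hcont : Continuous φ := by fun_prop
      simpa only [hφ0] using hcont.tendsto 0
    filter_upwards [hc.eventually hmin] with t ht
    rw [← hrφ t]
    exact sub_nonneg.2 ht
  have hroot : ∀ j ∈ S, ∃ l, l ≠ q ∧ θ l * lam j = 1 := by
    intro j hj
    have h0 := (Finset.sum_eq_zero_iff_of_nonneg fun j _ => hterm j).1 hA j (Finset.mem_univ j)
    rcases mul_eq_zero.1 h0 with h | h
    · exact absurd h (hSw j hj).ne'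
    rcases mul_eq_zero.1 h with h | h
    · obtain ⟨l, hl, h⟩ := Finset.prod_eq_zero_iff.1 h
      exact ⟨l, (Finset.mem_erase.1 hl).1, by linarith [pow_eq_zero_iff two_ne_zero |>.1 h]⟩
    rcases mul_eq_zero.1 h with h | h
    · exact absurd h (pow_pos (hlam j) 2).ne'
    · exact ⟨p, hpq, by linarith [pow_eq_zero_iff two_ne_zero |>.1 h]⟩
  have : Nonempty (Fin B) := ⟨p⟩
  choose! f hfq hf using hroot
  have hcard : S.card ≤ (Finset.univ.erase q).card := by
    refine Finset.card_le_card_of_injOn f (fun j hj => by simpa using hfq j hj) ?_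
    intro i hi j hj hij
    apply hSinj hi hj
    have h1 := hf i hi
    have h2 := hf j hj
    rw [← hij] at h2
    exact mul_left_cancel₀ (left_ne_zero_of_mul_eq_one h1) (h1.trans h2.symm)
  rw [hScard, Finset.card_erase_of_mem (Finset.mem_univ q), Finset.card_univ,
    Fintype.card_fin] at hcard
  omega
end

section
/- Let λ_1,…,λ_n > 0, w_1,…,w_n ≥ 0, and define the moments m_r = ∑_{j=1}^n w_j λ_j^r for r = 1,2,3,4. If there exist at least two indices j with w_j > 0 whose values λ_j are distinct, then (m_1 m_4 − m_2 m_3)² > 4 (m_1 m_3 − m_2²)(m_2 m_4 − m_3²). -/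
/-! The quadratic `C x² - B x + A`, with `C = m₁ m₃ - m₂²`, `B = m₁ m₄ - m₂ m₃` and
`A = m₂ m₄ - m₃²`, is up to a constant the degree-two orthogonal polynomial of the measure
`∑ wⱼ λⱼ δ_{λⱼ}`, so its discriminant is invariant under translating the measure. Centring at the
mean `m₂ / m₁` turns it into a sum of nonnegative terms; cleared of denominators this reads
`m₁² (B² - 4 C A) = 4 C³ + (m₁² m₄ - 3 m₁ m₂ m₃ + 2 m₂³)²`.
Finally `C > 0`, since `m₁ C = ∑ wⱼ λⱼ (m₁ λⱼ - m₂)²` is `m₁³` times the variance of the normalized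
measure, which has at least two atoms. -/


/-- **Strict discriminant inequality for the two-step lookahead quadratic.**
For `λ_j > 0`, `w_j ≥ 0` with at least two indices carrying positive weight and
distinct eigenvalues, the moments `m r = ∑ j, w j * λ_j ^ r` satisfy
`(m₁ m₄ − m₂ m₃)² > 4 (m₁ m₃ − m₂²)(m₂ m₄ − m₃²)`. -/
theorem strict_discriminant_inequality
    (n : ℕ) (lam w : Fin n → ℝ)
    (hlam : ∀ j, 0 < lam j) (hw : ∀ j, 0 ≤ w j)
    (hact : ∃ i j : Fin n, 0 < w i ∧ 0 < w j ∧ lam i ≠ lam j)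
    (m : ℕ → ℝ) (hm : ∀ r : ℕ, m r = ∑ j, w j * lam j ^ r) :
    4 * (m 1 * m 3 - m 2 ^ 2) * (m 2 * m 4 - m 3 ^ 2)
      < (m 1 * m 4 - m 2 * m 3) ^ 2 := by
  obtain ⟨i, j, hi, hj, hij⟩ := hact
  have h1 : 0 < m 1 := by
    rw [hm]
    exact Finset.sum_pos' (fun k _ => mul_nonneg (hw k) (pow_pos (hlam k) 1).le)
      ⟨i, Finset.mem_univ i, mul_pos hi (pow_pos (hlam i) 1)⟩
  have hvar : ∑ k, w k * lam k * (m 1 * lam k - m 2) ^ 2 = m 1 * (m 1 * m 3 - m 2 ^ 2) := by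
    have e : ∑ k, w k * lam k * (m 1 * lam k - m 2) ^ 2
        = m 1 ^ 2 * m 3 - 2 * m 1 * m 2 * m 2 + m 2 ^ 2 * m 1 := by
      conv_rhs => rw [hm 3]
      conv_rhs =>
        enter [1, 2, 2]
        rw [hm 2]
      conv_rhs =>
        enter [2, 2]
        rw [hm 1]
      rw [Finset.mul_sum, Finset.mul_sum, Finset.mul_sum, ← Finset.sum_sub_distrib,
        ← Finset.sum_add_distrib]
      exact Finset.sum_congr rfl fun k _ => by ring
    rw [e]
    ring
  -- The mean `m 2 / m 1` cannot equal both `lam i` and `lam j`.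
  have hne : ∃ k, 0 < w k ∧ m 1 * lam k - m 2 ≠ 0 := by
    by_contra! h
    exact hij (mul_left_cancel₀ h1.ne' (by linarith [h i hi, h j hj]))
  obtain ⟨k, hk, hk0⟩ := hne
  have hpos : 0 < m 1 * (m 1 * m 3 - m 2 ^ 2) := by
    rw [← hvar]
    exact Finset.sum_pos'
      (fun l _ => mul_nonneg (mul_nonneg (hw l) (hlam l).le) (sq_nonneg _))
      ⟨k, Finset.mem_univ k, mul_pos (mul_pos hk (hlam k)) (sq_pos_of_ne_zero hk0)⟩
  have hC : 0 < m 1 * m 3 - m 2 ^ 2 := pos_of_mul_pos_right hpos h1.le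
  have key : m 1 ^ 2 * ((m 1 * m 4 - m 2 * m 3) ^ 2
        - 4 * (m 1 * m 3 - m 2 ^ 2) * (m 2 * m 4 - m 3 ^ 2))
      = 4 * (m 1 * m 3 - m 2 ^ 2) ^ 3
        + (m 1 ^ 2 * m 4 - 3 * m 1 * m 2 * m 3 + 2 * m 2 ^ 3) ^ 2 := by
    ring
  have hprod : 0 < m 1 ^ 2 * ((m 1 * m 4 - m 2 * m 3) ^ 2
      - 4 * (m 1 * m 3 - m 2 ^ 2) * (m 2 * m 4 - m 3 ^ 2)) := by
    rw [key]
    positivity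
  exact sub_pos.mp (pos_of_mul_pos_right hprod (sq_nonneg _))
end

section
/- Let λ_1,…,λ_n > 0 and w_1,…,w_n ≥ 0, define the two-step objective r(θ_0, θ_1) = ∑_{j=1}^n w_j (1 − θ_0 λ_j)² (1 − θ_1 λ_j)², and assume there exist at least two indices j with w_j > 0 whose values λ_j are distinct. Define the moments m_r = ∑_j w_j λ_j^r for r = 1,2,3,4 and set θ± = (m_1 m_4 − m_2 m_3 ± √((m_2 m_3 − m_1 m_4)² − 4(m_1 m_3 − m_2²)(m_2 m_4 − m_3²))) / (2 (m_2 m_4 − m_3²)). Then r attains its global minimum over ℝ² at (θ⁺, θ⁻), and also at (θ⁻, θ⁺); that is, r(θ⁺, θ⁻) ≤ r(θ_0, θ_1) for all (θ_0, θ_1) ∈ ℝ². -/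
/-!
The objective depends on `(θ₀, θ₁)` only through `s = θ₀ + θ₁` and `p = θ₀ θ₁`, since
`(1 - θ₀ x) (1 - θ₁ x) = 1 - s x + p x ^ 2`; in `(s, p)` it is a convex weighted least-squares
functional. Its normal equations say that `q = 1 - s x + p x ^ 2` is `w`-orthogonal to `x` and
`x ^ 2`, that is, `m₁ - s m₂ + p m₃ = 0` and `m₂ - s m₃ + p m₄ = 0`. Two distinct active nodes give
`m₂ m₄ - m₃ ^ 2 > 0` (strict Cauchy-Schwarz, `moment_det_pos`), so the solution is unique, and
`θ±` are the formal roots of `t ^ 2 - s t + p`. These roots are real (`discrim_nonneg`): otherwise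
`q` would be positive everywhere, contradicting its orthogonality to `x`. Hence the minimizer
of the convex relaxation is attained by the real pair `(θ⁺, θ⁻)`.
-/

/-- Strict Cauchy-Schwarz for the moments of orders `2, 3, 4`. -/
lemma moment_det_pos {n : ℕ} {lam w : Fin n → ℝ} (hlam : ∀ j, 0 < lam j) (hw : ∀ j, 0 ≤ w j)
    (hact : ∃ i j : Fin n, 0 < w i ∧ 0 < w j ∧ lam i ≠ lam j)
    {m : ℕ → ℝ} (hm : ∀ r : ℕ, m r = ∑ j, w j * lam j ^ r) (hpos : ∀ r, 0 < m r) :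
    0 < m 2 * m 4 - m 3 ^ 2 := by
  have key : ∑ j, w j * lam j ^ 2 * (m 3 - m 2 * lam j) ^ 2 = m 2 * (m 2 * m 4 - m 3 ^ 2) := by
    have h : ∑ j, w j * lam j ^ 2 * (m 3 - m 2 * lam j) ^ 2
        = m 3 ^ 2 * m 2 - 2 * m 3 * m 2 * m 3 + m 2 ^ 2 * m 4 := by
      conv_rhs => rw [hm 4]
      conv_rhs => enter [1, 1, 2]; rw [hm 2]
      conv_rhs => enter [1, 2, 2]; rw [hm 3]
      simp only [Finset.mul_sum, ← Finset.sum_sub_distrib, ← Finset.sum_add_distrib]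
      exact Finset.sum_congr rfl fun j _ => by ring
    rw [h]; ring
  -- The residual `m 3 - m 2 * x` vanishes at a single `x`, so some active node escapes it.
  have hk : ∃ k, 0 < w k ∧ m 3 - m 2 * lam k ≠ 0 := by
    obtain ⟨i, j, hi, hj, hij⟩ := hact
    by_contra! hcon
    exact hij (mul_left_cancel₀ (hpos 2).ne' (by linarith [hcon i hi, hcon j hj]))
  obtain ⟨k, hk, hk0⟩ := hk
  have hsum : 0 < ∑ j, w j * lam j ^ 2 * (m 3 - m 2 * lam j) ^ 2 :=
    Finset.sum_pos' (fun j _ => mul_nonneg (mul_nonneg (hw j) (sq_nonneg _)) (sq_nonneg _))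
      ⟨k, Finset.mem_univ k,
        mul_pos (mul_pos hk (pow_pos (hlam k) 2)) (pow_pos (abs_pos.2 hk0) 2 |>.trans_eq
          (sq_abs _))⟩
  rw [key] at hsum
  exact (mul_pos_iff_of_pos_left (hpos 2)).1 hsum

/-- A monic quadratic `t ^ 2 - s t + p` has real roots as soon as `1 - s x + p x ^ 2` has zero
weighted sum against `x`: with a negative discriminant it would be positive at every node. -/
lemma discrim_nonneg {n : ℕ} {lam w : Fin n → ℝ} (hlam : ∀ j, 0 < lam j) (hw : ∀ j, 0 ≤ w j)
    (hact : ∃ i, 0 < w i) {s p : ℝ}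
    (h : ∑ j, w j * lam j * (1 - s * lam j + p * lam j ^ 2) = 0) : 4 * p ≤ s ^ 2 := by
  by_contra! hlt
  have hq : ∀ x : ℝ, 0 < 1 - s * x + p * x ^ 2 := fun x => by
    have hp : 0 < p := by nlinarith [sq_nonneg s]
    nlinarith [sq_nonneg (2 * p * x - s)]
  obtain ⟨i, hi⟩ := hact
  have : 0 < ∑ j, w j * lam j * (1 - s * lam j + p * lam j ^ 2) :=
    Finset.sum_pos' (fun j _ => mul_nonneg (mul_nonneg (hw j) (hlam j).le) (hq _).le)
      ⟨i, Finset.mem_univ i, mul_pos (mul_pos hi (hlam i)) (hq _)⟩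
  exact this.ne' h

/-- The normal equations are sufficient for global optimality: the difference of the objectives
is a sum of squares plus cross terms that vanish by orthogonality. -/
lemma least_squares_le {n : ℕ} {lam w : Fin n → ℝ} (hw : ∀ j, 0 ≤ w j) {s p : ℝ}
    (h1 : ∑ j, w j * lam j * (1 - s * lam j + p * lam j ^ 2) = 0)
    (h2 : ∑ j, w j * lam j ^ 2 * (1 - s * lam j + p * lam j ^ 2) = 0) (u v : ℝ) :
    ∑ j, w j * (1 - s * lam j + p * lam j ^ 2) ^ 2
      ≤ ∑ j, w j * (1 - u * lam j + v * lam j ^ 2) ^ 2 := by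
  have key : ∑ j, w j * (1 - u * lam j + v * lam j ^ 2) ^ 2
      = ∑ j, w j * (1 - s * lam j + p * lam j ^ 2) ^ 2
        + 2 * (s - u) * ∑ j, w j * lam j * (1 - s * lam j + p * lam j ^ 2)
        + 2 * (v - p) * ∑ j, w j * lam j ^ 2 * (1 - s * lam j + p * lam j ^ 2)
        + ∑ j, w j * ((s - u) * lam j + (v - p) * lam j ^ 2) ^ 2 := by
    simp only [Finset.mul_sum, ← Finset.sum_add_distrib]
    exact Finset.sum_congr rfl fun j _ => by ring
  have hnn : 0 ≤ ∑ j, w j * ((s - u) * lam j + (v - p) * lam j ^ 2) ^ 2 :=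
    Finset.sum_nonneg fun j _ => mul_nonneg (hw j) (sq_nonneg _)
  rw [key, h1, h2]
  linarith

/-- **Closed-form global minimizers of the two-step lookahead problem.**
Under the two-activity assumption, the two-step objective
`r(θ₀, θ₁) = ∑ j, w j (1 − θ₀ λ_j)² (1 − θ₁ λ_j)²` attains its global minimum
over `ℝ²` at `(θ⁺, θ⁻)` (and at `(θ⁻, θ⁺)`), where `θ±` are given in closed
form from the moments `m r = ∑ j, w j λ_j ^ r`. -/
theorem two_step_global_minimizer
    (n : ℕ) (lam w : Fin n → ℝ)
    (hlam : ∀ j, 0 < lam j) (hw : ∀ j, 0 ≤ w j)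
    (hact : ∃ i j : Fin n, 0 < w i ∧ 0 < w j ∧ lam i ≠ lam j)
    (m : ℕ → ℝ) (hm : ∀ r : ℕ, m r = ∑ j, w j * lam j ^ r)
    (θp θm : ℝ)
    (hθp : θp = (m 1 * m 4 - m 2 * m 3 +
        Real.sqrt ((m 2 * m 3 - m 1 * m 4) ^ 2
          - 4 * (m 1 * m 3 - m 2 ^ 2) * (m 2 * m 4 - m 3 ^ 2)))
      / (2 * (m 2 * m 4 - m 3 ^ 2)))
    (hθm : θm = (m 1 * m 4 - m 2 * m 3 -
        Real.sqrt ((m 2 * m 3 - m 1 * m 4) ^ 2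
          - 4 * (m 1 * m 3 - m 2 ^ 2) * (m 2 * m 4 - m 3 ^ 2)))
      / (2 * (m 2 * m 4 - m 3 ^ 2))) :
    (∀ θ0 θ1 : ℝ,
        ∑ j, w j * (1 - θp * lam j) ^ 2 * (1 - θm * lam j) ^ 2
          ≤ ∑ j, w j * (1 - θ0 * lam j) ^ 2 * (1 - θ1 * lam j) ^ 2) ∧
    (∀ θ0 θ1 : ℝ,
        ∑ j, w j * (1 - θm * lam j) ^ 2 * (1 - θp * lam j) ^ 2
          ≤ ∑ j, w j * (1 - θ0 * lam j) ^ 2 * (1 - θ1 * lam j) ^ 2) := by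
  have hpos : ∀ r, 0 < m r := fun r => by
    obtain ⟨i, _, hi, _⟩ := hact
    rw [hm]
    exact Finset.sum_pos' (fun j _ => mul_nonneg (hw j) (pow_pos (hlam j) r).le)
      ⟨i, Finset.mem_univ i, mul_pos hi (pow_pos (hlam i) r)⟩
  have hD := moment_det_pos hlam hw hact hm hpos
  have hmom1 : ∀ s p : ℝ, ∑ j, w j * lam j * (1 - s * lam j + p * lam j ^ 2)
      = m 1 - s * m 2 + p * m 3 := fun s p => by
    simp only [hm, Finset.mul_sum, ← Finset.sum_sub_distrib, ← Finset.sum_add_distrib]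
    exact Finset.sum_congr rfl fun j _ => by ring
  have hmom2 : ∀ s p : ℝ, ∑ j, w j * lam j ^ 2 * (1 - s * lam j + p * lam j ^ 2)
      = m 2 - s * m 3 + p * m 4 := fun s p => by
    simp only [hm, Finset.mul_sum, ← Finset.sum_sub_distrib, ← Finset.sum_add_distrib]
    exact Finset.sum_congr rfl fun j _ => by ring
  -- Cramer's rule for the normal equations.
  obtain ⟨s, hs⟩ : ∃ s, s = (m 1 * m 4 - m 2 * m 3) / (m 2 * m 4 - m 3 ^ 2) := ⟨_, rfl⟩
  obtain ⟨p, hp⟩ : ∃ p, p = (m 1 * m 3 - m 2 ^ 2) / (m 2 * m 4 - m 3 ^ 2) := ⟨_, rfl⟩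
  have hsD : s * (m 2 * m 4 - m 3 ^ 2) = m 1 * m 4 - m 2 * m 3 := by
    rw [hs, div_mul_cancel₀ _ hD.ne']
  have hpD : p * (m 2 * m 4 - m 3 ^ 2) = m 1 * m 3 - m 2 ^ 2 := by
    rw [hp, div_mul_cancel₀ _ hD.ne']
  have h1 : ∑ j, w j * lam j * (1 - s * lam j + p * lam j ^ 2) = 0 := by
    rw [hmom1]
    refine mul_right_cancel₀ hD.ne' ?_
    linear_combination (-m 2) * hsD + m 3 * hpD
  have h2 : ∑ j, w j * lam j ^ 2 * (1 - s * lam j + p * lam j ^ 2) = 0 := by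
    rw [hmom2]
    refine mul_right_cancel₀ hD.ne' ?_
    linear_combination (-m 3) * hsD + m 4 * hpD
  have hdisc := discrim_nonneg hlam hw (hact.imp fun _ ⟨_, hi, _⟩ => hi) h1
  have hrad : 0 ≤ (m 2 * m 3 - m 1 * m 4) ^ 2
      - 4 * (m 1 * m 3 - m 2 ^ 2) * (m 2 * m 4 - m 3 ^ 2) := by
    rw [← hpD, show (m 2 * m 3 - m 1 * m 4) ^ 2 = (s * (m 2 * m 4 - m 3 ^ 2)) ^ 2 by
      rw [hsD]; ring]
    linarith [mul_nonneg (sub_nonneg.2 hdisc) (sq_nonneg (m 2 * m 4 - m 3 ^ 2))]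
  have hsq := Real.sq_sqrt hrad
  -- Vieta's formulas for `θ±`; the product one needs the radicand to be nonnegative.
  have hsum : θp + θm = s := by
    rw [hθp, hθm, hs]
    field_simp
    ring
  have hprod : θp * θm = p := by
    rw [hθp, hθm, hp, div_mul_div_comm, div_eq_div_iff (by positivity) hD.ne']
    linear_combination (-(m 2 * m 4 - m 3 ^ 2)) * hsq
  have hfac : ∀ a b x : ℝ, ∀ c : ℝ, c * (1 - a * x) ^ 2 * (1 - b * x) ^ 2
      = c * (1 - (a + b) * x + a * b * x ^ 2) ^ 2 := fun a b x c => by ring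
  simp only [hfac, add_comm θm θp, mul_comm θm θp, hsum, hprod]
  exact ⟨fun _ _ => least_squares_le hw h1 h2 _ _, fun _ _ => least_squares_le hw h1 h2 _ _⟩
end

section
/- Let λ_1,…,λ_n > 0 and w_1,…,w_n ≥ 0, assume there exist at least two indices j with w_j > 0 whose values λ_j are distinct, define the moments m_r = ∑_j w_j λ_j^r for r = 1,2,3,4, and set θ± = (m_1 m_4 − m_2 m_3 ± √((m_2 m_3 − m_1 m_4)² − 4(m_1 m_3 − m_2²)(m_2 m_4 − m_3²))) / (2 (m_2 m_4 − m_3²)). Then both θ⁺ and θ⁻ are nonnegative (indeed θ⁺ > θ⁻ > 0). -/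
/-!
Write `A = m₁m₃ - m₂²`, `C = m₂m₄ - m₃²`, `B = m₁m₄ - m₂m₃`, so that `θ⁺` and `θ⁻` are the roots of
`p(x) = C x² - B x + A`. Strict Cauchy-Schwarz for the weights `w λ` and `w λ²`
(`strict_cauchy_moments`) gives `A, C > 0`, and multiplying `m₁m₃ > m₂²` by `m₂m₄ > m₃²` gives
`B > 0`. The discriminant is positive because `p(m₂ / m₃) = -A C / m₃² < 0`. Hence the roots are
real and distinct, and both are positive since their sum `B / C` and product `A / C` are.
-/

/-- Strict Cauchy-Schwarz: equality would force `x` to be constant on the support of `u`. -/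
lemma strict_cauchy_moments {n : ℕ} (u x : Fin n → ℝ) (hu : ∀ j, 0 ≤ u j)
    (h : ∃ i j : Fin n, 0 < u i ∧ 0 < u j ∧ x i ≠ x j) :
    (∑ j, u j * x j) ^ 2 < (∑ j, u j) * ∑ j, u j * x j ^ 2 := by
  obtain ⟨i, j, hi, hj, hij⟩ := h
  have hS : 0 < ∑ k, u k := Finset.sum_pos' (fun k _ => hu k) ⟨i, Finset.mem_univ i, hi⟩
  set S := ∑ k, u k with hSdef
  set T := ∑ k, u k * x k with hTdef
  set Q := ∑ k, u k * x k ^ 2 with hQdef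
  -- `S ^ 2` times the weighted sum of squared deviations from the mean `T / S`.
  have key : ∑ k, u k * (S * x k - T) ^ 2 = S * (S * Q - T ^ 2) := by
    have h1 : ∑ k, u k * (S * x k - T) ^ 2 =
        ∑ k, (S ^ 2 * (u k * x k ^ 2) - 2 * S * T * (u k * x k) + T ^ 2 * u k) :=
      Finset.sum_congr rfl fun k _ => by ring
    rw [h1, Finset.sum_add_distrib, Finset.sum_sub_distrib, ← Finset.mul_sum, ← Finset.mul_sum,
      ← Finset.mul_sum, ← hSdef, ← hTdef, ← hQdef]
    ring
  have hnn : ∀ k, 0 ≤ u k * (S * x k - T) ^ 2 := fun k => mul_nonneg (hu k) (sq_nonneg _)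
  have hpos : 0 < ∑ k, u k * (S * x k - T) ^ 2 := by
    refine Finset.sum_pos' (fun k _ => hnn k) ?_
    by_cases hiT : S * x i - T = 0
    · have hjT : S * x j - T ≠ 0 := fun hjT =>
        hij (mul_left_cancel₀ hS.ne' (by linarith))
      exact ⟨j, Finset.mem_univ j, by positivity⟩
    · exact ⟨i, Finset.mem_univ i, by positivity⟩
  rw [key] at hpos
  linarith [pos_of_mul_pos_right hpos hS.le]


/-- **Positivity of the two-step optimal step sizes.**
Under the two-activity assumption, the closed-form optimal two-step step sizes
`θ⁺` and `θ⁻` are both nonnegative; indeed `θ⁺ > θ⁻ > 0`. -/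
theorem two_step_optimal_step_sizes_positive
    (n : ℕ) (lam w : Fin n → ℝ)
    (hlam : ∀ j, 0 < lam j) (hw : ∀ j, 0 ≤ w j)
    (hact : ∃ i j : Fin n, 0 < w i ∧ 0 < w j ∧ lam i ≠ lam j)
    (m : ℕ → ℝ) (hm : ∀ r : ℕ, m r = ∑ j, w j * lam j ^ r)
    (θp θm : ℝ)
    (hθp : θp = (m 1 * m 4 - m 2 * m 3 +
        Real.sqrt ((m 2 * m 3 - m 1 * m 4) ^ 2
          - 4 * (m 1 * m 3 - m 2 ^ 2) * (m 2 * m 4 - m 3 ^ 2)))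
      / (2 * (m 2 * m 4 - m 3 ^ 2)))
    (hθm : θm = (m 1 * m 4 - m 2 * m 3 -
        Real.sqrt ((m 2 * m 3 - m 1 * m 4) ^ 2
          - 4 * (m 1 * m 3 - m 2 ^ 2) * (m 2 * m 4 - m 3 ^ 2)))
      / (2 * (m 2 * m 4 - m 3 ^ 2))) :
    0 ≤ θp ∧ 0 ≤ θm ∧ θm < θp ∧ 0 < θm := by
  have hmpos : ∀ r, 0 < m r := by
    intro r
    obtain ⟨i, -, hi, -⟩ := hact
    rw [hm]
    exact Finset.sum_pos' (fun k _ => mul_nonneg (hw k) (pow_pos (hlam k) r).le)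
      ⟨i, Finset.mem_univ i, mul_pos hi (pow_pos (hlam i) r)⟩
  have hcs : ∀ r, m (r + 1) ^ 2 < m r * m (r + 2) := by
    intro r
    obtain ⟨i, j, hi, hj, hij⟩ := hact
    have h := strict_cauchy_moments (fun k => w k * lam k ^ r) lam
      (fun k => mul_nonneg (hw k) (pow_pos (hlam k) r).le)
      ⟨i, j, mul_pos hi (pow_pos (hlam i) r), mul_pos hj (pow_pos (hlam j) r), hij⟩
    simpa only [hm, pow_add, pow_one, mul_assoc] using h
  have h1 := hmpos 1
  have h2 := hmpos 2
  have h3 := hmpos 3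
  have h4 := hmpos 4
  have hA : 0 < m 1 * m 3 - m 2 ^ 2 := sub_pos.2 (hcs 1)
  have hC : 0 < m 2 * m 4 - m 3 ^ 2 := sub_pos.2 (hcs 2)
  have hB : 0 < m 1 * m 4 - m 2 * m 3 := by
    have h : 0 < (m 2 * m 3) * (m 1 * m 4 - m 2 * m 3) := by
      have e : (m 2 * m 3) * (m 1 * m 4 - m 2 * m 3)
          = (m 1 * m 3 - m 2 ^ 2) * (m 2 * m 4) + m 2 ^ 2 * (m 2 * m 4 - m 3 ^ 2) := by ring
      rw [e]; positivity
    exact pos_of_mul_pos_right h (by positivity)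
  have hD : 0 < (m 2 * m 3 - m 1 * m 4) ^ 2
      - 4 * (m 1 * m 3 - m 2 ^ 2) * (m 2 * m 4 - m 3 ^ 2) := by
    -- Completing the square in `p(m₂ / m₃) = -A C / m₃²`, with denominators cleared.
    have e : m 3 ^ 2 * ((m 2 * m 3 - m 1 * m 4) ^ 2
        - 4 * (m 1 * m 3 - m 2 ^ 2) * (m 2 * m 4 - m 3 ^ 2))
        = (2 * (m 2 * m 4 - m 3 ^ 2) * m 2 - (m 1 * m 4 - m 2 * m 3) * m 3) ^ 2
          + 4 * (m 1 * m 3 - m 2 ^ 2) * (m 2 * m 4 - m 3 ^ 2) ^ 2 := by ring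
    refine pos_of_mul_pos_right (a := m 3 ^ 2) ?_ (by positivity)
    rw [e]; positivity
  have hs := Real.sqrt_pos.2 hD
  have hlt : Real.sqrt ((m 2 * m 3 - m 1 * m 4) ^ 2
      - 4 * (m 1 * m 3 - m 2 ^ 2) * (m 2 * m 4 - m 3 ^ 2)) < m 1 * m 4 - m 2 * m 3 := by
    rw [Real.sqrt_lt' hB]
    have := mul_pos hA hC
    linarith
  have hm0 : 0 < θm := by
    rw [hθm]
    exact div_pos (sub_pos.2 hlt) (by positivity)
  have hmp : θm < θp := by
    rw [hθm, hθp]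
    exact div_lt_div_of_pos_right (by linarith) (by positivity)
  exact ⟨(hm0.trans hmp).le, hm0.le, hmp, hm0⟩
end

section
/- Let B ≥ 1, let λ_1,…,λ_n > 0 and w_1,…,w_n ≥ 0, and define the B-step objective r(θ_0,…,θ_{B−1}) = ∑_{j=1}^n w_j ∏_{l=0}^{B−1} (1 − θ_l λ_j)². If there exist B indices j with w_j > 0 whose values λ_j are pairwise distinct, then r attains its global minimum over ℝ^B; that is, there exists θ* ∈ ℝ^B with r(θ*) ≤ r(θ) for all θ ∈ ℝ^B. -/
/-!
The objective is at least `r 0` outside a bounded set, so the minimum exists by continuity and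
compactness. Let `S` be the set of `B` active indices. Since the `lam j`, `j ∈ S`, are distinct,
there is `δ > 0` such that no real `t` makes both `|1 - t * lam i|` and `|1 - t * lam j|` smaller
than `δ` for distinct `i, j ∈ S` (`exists_separation`). If one coordinate `θ m` is huge, each of
the other `B - 1` coordinates can therefore make at most one factor small, and by pigeonhole some
index `j ∈ S` has all its factors with `l ≠ m` bounded below by `δ` (`exists_unhit_index`). For
this `j` the remaining factor `|1 - θ m * lam j|` is huge, hence so is the `j`-th term of `r`.
-/

open Filter Topology in
/-- A single constant `δ` bounds the active eigenvalues and weights from below and the relative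
gaps between distinct active eigenvalues; the last clause is the form in which the gaps are used. -/
lemma exists_separation {n : ℕ} (lam w : Fin n → ℝ) (S : Finset (Fin n))
    (hlam : ∀ j, 0 < lam j) (hw : ∀ j ∈ S, 0 < w j) (hS : Set.InjOn lam (S : Set (Fin n))) :
    ∃ δ : ℝ, 0 < δ ∧ (∀ j, δ ≤ lam j) ∧ (∀ j ∈ S, δ ≤ w j) ∧
      ∀ i ∈ S, ∀ j ∈ S, ∀ t : ℝ, |1 - t * lam i| < δ → |1 - t * lam j| < δ → i = j := by
  have small : ∀ c : ℝ, 0 < c → ∀ᶠ δ in 𝓝[>] (0 : ℝ), δ ≤ c := fun c hc =>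
    (eventually_le_nhds hc).filter_mono nhdsWithin_le_nhds
  have h1 : ∀ᶠ δ in 𝓝[>] (0 : ℝ), ∀ j, δ ≤ lam j :=
    eventually_all.2 fun j => small _ (hlam j)
  have h2 : ∀ᶠ δ in 𝓝[>] (0 : ℝ), ∀ j, j ∈ S → δ ≤ w j := by
    refine eventually_all.2 fun j => ?_
    by_cases hj : j ∈ S
    · exact (small _ (hw j hj)).mono fun _ h _ => h
    · exact Eventually.of_forall fun _ h => absurd h hj
  have h3 : ∀ᶠ δ in 𝓝[>] (0 : ℝ), ∀ i j, lam i ≠ lam j →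
      δ ≤ |lam j - lam i| / (lam i + lam j) := by
    refine eventually_all.2 fun i => eventually_all.2 fun j => ?_
    by_cases hij : lam i = lam j
    · exact Eventually.of_forall fun _ h => absurd hij h
    · have hgap : 0 < |lam j - lam i| / (lam i + lam j) :=
        div_pos (abs_pos.2 (sub_ne_zero.2 (Ne.symm hij))) (add_pos (hlam i) (hlam j))
      exact (small _ hgap).mono fun _ h _ => h
  have h4 : ∀ᶠ δ in 𝓝[>] (0 : ℝ), 0 < δ := self_mem_nhdsWithin
  obtain ⟨δ, ⟨⟨a1, a2⟩, a3⟩, a4⟩ := (((h1.and h2).and h3).and h4).exists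
  refine ⟨δ, a4, a1, a2, fun i hi j hj t hti htj => ?_⟩
  by_contra hij
  have hgap := a3 i j fun h => hij (hS hi hj h)
  rw [le_div_iff₀ (add_pos (hlam i) (hlam j))] at hgap
  have key : lam j - lam i = (1 - t * lam i) * lam j - (1 - t * lam j) * lam i := by ring
  have hlt : |lam j - lam i| < δ * (lam i + lam j) := by
    rw [key]
    refine (abs_sub _ _).trans_lt ?_
    rw [abs_mul, abs_mul, abs_of_pos (hlam i), abs_of_pos (hlam j)]
    nlinarith [mul_lt_mul_of_pos_right hti (hlam j), mul_lt_mul_of_pos_right htj (hlam i)]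
  linarith

/-- Pigeonhole: `B - 1` step sizes cannot make a factor small at each of `B` separated indices. -/
lemma exists_unhit_index {n B : ℕ} (lam : Fin n → ℝ) (S : Finset (Fin n)) (hcard : S.card = B)
    (δ : ℝ)
    (hsep : ∀ i ∈ S, ∀ j ∈ S, ∀ t : ℝ, |1 - t * lam i| < δ → |1 - t * lam j| < δ → i = j)
    (θ : Fin B → ℝ) (m : Fin B) :
    ∃ j ∈ S, ∀ l ≠ m, δ ≤ |1 - θ l * lam j| := by
  by_contra! h
  have : Nonempty (Fin B) := ⟨m⟩
  choose! f hfm hf using h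
  have hlt : (Finset.univ.erase m).card < S.card := by
    rw [Finset.card_erase_of_mem (Finset.mem_univ m), Finset.card_univ, Fintype.card_fin, hcard]
    have := m.pos
    omega
  obtain ⟨i, hi, j, hj, hne, heq⟩ := Finset.exists_ne_map_eq_of_card_lt_of_maps_to hlt
    (f := f) (fun j hj => by simpa using hfm j hj)
  exact hne (hsep i hi j hj (θ (f i)) (hf i hi) (by rw [heq]; exact hf j hj))

/-- **Existence of a global minimizer of the `B`-step lookahead objective.**
Under the `B`-activity assumption (there are `B` indices `j` with `w j > 0` whose
eigenvalues `lam j` are pairwise distinct), the objective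
`r θ = ∑ j, w j * ∏ l, (1 − θ l * lam j)²` attains its global minimum over `ℝ^B`. -/
theorem B_step_objective_attains_min
    (n B : ℕ) (hB : 1 ≤ B)
    (lam w : Fin n → ℝ)
    (hlam : ∀ j, 0 < lam j) (hw : ∀ j, 0 ≤ w j)
    (hact : ∃ S : Finset (Fin n), S.card = B ∧ (∀ j ∈ S, 0 < w j) ∧
      Set.InjOn lam (S : Set (Fin n)))
    (r : (Fin B → ℝ) → ℝ)
    (hr : ∀ θ : Fin B → ℝ, r θ = ∑ j, w j * ∏ l, (1 - θ l * lam j) ^ 2) :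
    ∃ θstar : Fin B → ℝ, ∀ θ : Fin B → ℝ, r θstar ≤ r θ := by
  obtain ⟨S, hcard, hwS, hinj⟩ := hact
  obtain ⟨δ, hδ, hδlam, hδw, hsep⟩ := exists_separation lam w S hlam hwS hinj
  have hcont : Continuous r := by
    rw [funext hr]
    fun_prop
  have hterm : ∀ (θ : Fin B → ℝ) j, 0 ≤ w j * ∏ l, (1 - θ l * lam j) ^ 2 := fun θ j =>
    mul_nonneg (hw j) (Finset.prod_nonneg fun l _ => sq_nonneg _)
  have hr0 : 0 ≤ r 0 := by
    rw [hr]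
    exact Finset.sum_nonneg fun j _ => hterm 0 j
  -- `c` bounds from below the weight and the `B - 1` factors other than the huge one.
  set c : ℝ := δ * (δ ^ 2) ^ (B - 1) with hc
  have hcpos : 0 < c := by positivity
  set K : ℝ := r 0 / c with hK
  have hK0 : 0 ≤ K := div_nonneg hr0 hcpos.le
  -- The radius is chosen so that `|θ m| ≥ (K + 2) / δ` forces `|1 - θ m * lam j| ≥ K + 1`.
  have hlarge : ∀ (θ : Fin B → ℝ) (m : Fin B), (K + 2) / δ ≤ |θ m| → r 0 ≤ r θ := by
    intro θ m hm
    obtain ⟨j, hjS, hj⟩ := exists_unhit_index lam S hcard δ hsep θ m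
    have hfac : K + 1 ≤ |1 - θ m * lam j| := by
      rw [div_le_iff₀ hδ] at hm
      have h1 : |θ m| * δ ≤ |θ m * lam j| := by
        rw [abs_mul, abs_of_pos (hlam j)]
        exact mul_le_mul_of_nonneg_left (hδlam j) (abs_nonneg _)
      have h2 := abs_sub_abs_le_abs_sub (θ m * lam j) 1
      rw [abs_one, abs_sub_comm] at h2
      linarith
    have hsq : K ≤ (1 - θ m * lam j) ^ 2 := by
      rw [← sq_abs]
      nlinarith
    have hrest : (δ ^ 2) ^ (B - 1) ≤ ∏ l ∈ Finset.univ.erase m, (1 - θ l * lam j) ^ 2 := by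
      have hconst : ∏ _l ∈ Finset.univ.erase m, δ ^ 2 = (δ ^ 2) ^ (B - 1) := by
        simp [Finset.card_erase_of_mem]
      rw [← hconst]
      refine Finset.prod_le_prod (fun _ _ => sq_nonneg δ) fun l hl => ?_
      rw [← sq_abs (1 - θ l * lam j)]
      exact pow_le_pow_left₀ hδ.le (hj l (Finset.ne_of_mem_erase hl)) 2
    calc r 0 = δ * (K * (δ ^ 2) ^ (B - 1)) := by
          rw [hK, hc]
          field_simp
      _ ≤ w j * ((1 - θ m * lam j) ^ 2 *
            ∏ l ∈ Finset.univ.erase m, (1 - θ l * lam j) ^ 2) := by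
          have := hδw j hjS
          have := hw j
          gcongr
      _ = w j * ∏ l, (1 - θ l * lam j) ^ 2 := by
          rw [Finset.mul_prod_erase _ (fun l => (1 - θ l * lam j) ^ 2) (Finset.mem_univ m)]
      _ ≤ r θ := by
          rw [hr]
          exact Finset.single_le_sum (f := fun j => w j * ∏ l, (1 - θ l * lam j) ^ 2)
            (fun j _ => hterm θ j) (Finset.mem_univ j)
  refine hcont.exists_forall_le' 0 ?_
  filter_upwards [(isCompact_closedBall (0 : Fin B → ℝ) ((K + 2) / δ)).compl_mem_cocompact]
    with θ hθ
  by_contra hlt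
  refine hθ (mem_closedBall_zero_iff.2 ((pi_norm_le_iff_of_nonneg (by positivity)).2 fun m => ?_))
  by_contra! hm
  exact hlt (hlarge θ m hm.le)
end
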